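/- arXiv:1205.4889 — 2 statements merged into one kernel-verified Lean document; each statement's English description precedes it below -/
import Mathlib

section
/- Every quantitative multiplayer reachability game has a finite-memory Nash equilibrium. -/
/-- A quantitative multiplayer reachability game: a finite directed graph whose
vertex set is partitioned among the players (via `owner`), with an initial vertex `v0`,
an edge relation `E` such that every vertex has an outgoing edge, and a goal set
`goal i` for each player `i`. -/
structure ReachGame (P : Type) (V : Type) where
  owner : V → P
  v0 : V
  E : V → V → Prop
  total : ∀ v : V, ∃ w : V, E v w
  goal : P → Set V

namespace ReachGame

variable {P V : Type} [DecidableEq P] (G : ReachGame P V)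

/-- The last vertex of a history (with default `v0`). -/
def lastV (h : List V) : V := h.getLastD G.v0

/-- A history: a nonempty finite path in the graph starting at `v0`. -/
def IsHistory (h : List V) : Prop :=
  h ≠ [] ∧ h.head? = some G.v0 ∧ List.Chain' G.E h

/-- A play: an infinite path starting at `v0`. -/
def IsPlay (ρ : ℕ → V) : Prop :=
  ρ 0 = G.v0 ∧ ∀ k : ℕ, G.E (ρ k) (ρ (k + 1))

/-- `σ` is a (total encoding of a) strategy of player `i`: on every history ending in
a vertex owned by `i` it chooses a successor along an edge. -/
def IsStrategy (i : P) (σ : List V → V) : Prop :=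
  ∀ h : List V, G.IsHistory h → G.owner (G.lastV h) = i → G.E (G.lastV h) (σ h)

/-- A strategy profile: one strategy per player. -/
def IsProfile (prof : P → List V → V) : Prop :=
  ∀ i : P, G.IsStrategy i (prof i)

/-- The history of length `n` (i.e. with `n` edges) obtained by letting the players
follow the profile `prof` from `v0`. -/
def outHist (prof : P → List V → V) : ℕ → List V
  | 0 => [G.v0]
  | n + 1 => outHist prof n ++ [prof (G.owner (G.lastV (outHist prof n))) (outHist prof n)]

/-- The outcome play of the strategy profile `prof`. -/
def outcome (prof : P → List V → V) (n : ℕ) : V :=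
  G.lastV (G.outHist prof n)

/-- The cost of player `i` for the play `ρ`: the least `l` with `ρ l ∈ goal i`,
and `⊤` (`+∞`) if there is no such `l`. -/
noncomputable def cost (i : P) (ρ : ℕ → V) : ℕ∞ :=
  sInf {n : ℕ∞ | ∃ l : ℕ, n = (l : ℕ∞) ∧ ρ l ∈ G.goal i}

/-- Nash equilibrium: no player can strictly decrease his cost by a unilateral
deviation. -/
def IsNash (prof : P → List V → V) : Prop :=
  ∀ (j : P) (σ' : List V → V), G.IsStrategy j σ' →
    G.cost j (G.outcome prof) ≤ G.cost j (G.outcome (Function.update prof j σ'))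

/-- `h ≈_σ h'` : the strategy `σ` of player `i` behaves the same after `h` and `h'`,
i.e. `σ (h ++ δ) = σ (h' ++ δ)` for every suffix `δ` making both `h ++ δ` and
`h' ++ δ` histories ending in a vertex of player `i`. -/
def MemEq (i : P) (σ : List V → V) (h h' : List V) : Prop :=
  ∀ δ : List V,
    G.IsHistory (h ++ δ) → G.owner (G.lastV (h ++ δ)) = i →
    G.IsHistory (h' ++ δ) → G.owner (G.lastV (h' ++ δ)) = i →
    σ (h ++ δ) = σ (h' ++ δ)

/-- A strategy of player `i` is finite-memory if the relation `≈_σ` has finitely many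
equivalence classes on histories, i.e. there is a finite set of histories meeting
every class. -/
def FiniteMemory (i : P) (σ : List V → V) : Prop :=
  ∃ S : Finset (List V), ∀ h : List V, G.IsHistory h →
    ∃ h' ∈ S, G.IsHistory h' ∧ G.MemEq i σ h h'

/-- A profile is finite-memory if each of its strategies is. -/
def FiniteMemoryProfile (prof : P → List V → V) : Prop :=
  ∀ i : P, G.FiniteMemory i (prof i)

/-- `Visit h`: the set of players whose goal set is visited by the finite path `h`. -/
def visitL (h : List V) : Set P := {i : P | ∃ v ∈ h, v ∈ G.goal i}

/-- The type of a strategy profile: the set of players whose goal set is visited by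
the outcome. -/
def typeOf (prof : P → List V → V) : Set P :=
  {i : P | ∃ l : ℕ, G.outcome prof l ∈ G.goal i}

/-! ### The truncated game `G^d` -/

/-- A strategy of player `i` in the truncated game `G^d` : it chooses a successor on
every history with less than `d` edges (list length `≤ d`) ending in a vertex of `i`. -/
def IsStrategyTrunc (d : ℕ) (i : P) (σ : List V → V) : Prop :=
  ∀ h : List V, G.IsHistory h → h.length ≤ d → G.owner (G.lastV h) = i →
    G.E (G.lastV h) (σ h)

/-- A strategy profile of the truncated game `G^d`. -/
def IsProfileTrunc (d : ℕ) (prof : P → List V → V) : Prop :=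
  ∀ i : P, G.IsStrategyTrunc d i (prof i)

/-- The cost of player `i` for a finite play `h` (a list of vertices): the least
position of `h` lying in `goal i`, and `⊤` if `goal i` is not visited. -/
noncomputable def costList (i : P) (h : List V) : ℕ∞ :=
  sInf {n : ℕ∞ | ∃ l : ℕ, n = (l : ℕ∞) ∧ l < h.length ∧ h.getD l G.v0 ∈ G.goal i}

/-- Nash equilibrium of the truncated game `G^d` (whose plays are the histories with
exactly `d` edges). -/
def IsNashTrunc (d : ℕ) (prof : P → List V → V) : Prop :=
  ∀ (j : P) (σ' : List V → V), G.IsStrategyTrunc d j σ' →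
    G.costList j (G.outHist prof d) ≤
      G.costList j (G.outHist (Function.update prof j σ') d)

/-- The type of a strategy profile of the truncated game `G^d`. -/
def typeOfTrunc (d : ℕ) (prof : P → List V → V) : Set P :=
  G.visitL (G.outHist prof d)

end ReachGame

/-!
For each player `j`, let `value j v` be the cost `j` can guarantee from `v` in the zero-sum game
against the coalition of all other players. There is a positional profile `τ` whose every move
is optimal for the player making it. Outside `j`'s goal set each move of `τ` decreases `value j`
by at least one: `j`'s own moves because they are optimal, those of `j`'s opponents because every
move of theirs does. Hence along the play `ρ` of `τ` the cost of `j` is at most `n + value j (ρ n)`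
for every `n`.

Let everybody follow `τ` until somebody leaves it, and let everybody then play the positional
strategy that is optimal for the coalition against the player who left first. After a deviation
by `j`, no move decreases `value j` by more than one, so `n + value j (ρ' n)` is nondecreasing from
there on and remains an upper bound for the equilibrium cost of `j`. When the deviating play
reaches `j`'s goal set, `value j` is `0`, so `j` has gained nothing. The profile only has
to remember the current vertex and the vertex at which `τ` was first left.
-/

namespace ReachGame

section Value

variable {P V : Type} (G : ReachGame P V)

open Classical in
/-- The Bellman operator of the zero-sum game in which player `j` minimizes the time to reach
`goal j` and the other players jointly maximize it. -/
noncomputable def bellman (j : P) : (V → ℕ∞) →o (V → ℕ∞) where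
  toFun f v :=
    if v ∈ G.goal j then 0
    else if G.owner v = j then (⨅ w : {w // G.E v w}, f w) + 1
    else (⨆ w : {w // G.E v w}, f w) + 1
  monotone' f g hfg v := by
    dsimp only
    split_ifs
    · exact le_rfl
    · gcongr
      exact hfg _
    · gcongr
      exact hfg _

/-- The value of vertex `v` in the zero-sum game of player `j` against the coalition of all other
players, as the least fixed point of the Bellman operator. -/
noncomputable def value (j : P) : V → ℕ∞ := (G.bellman j).lfp

theorem bellman_value (j : P) : G.bellman j (G.value j) = G.value j :=
  (G.bellman j).map_lfp

variable {G} {j : P} {v w : V}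

theorem value_of_mem_goal (hv : v ∈ G.goal j) : G.value j v = 0 :=
  (congrFun (G.bellman_value j) v).symm.trans (if_pos hv)

theorem value_of_owner_eq (hv : v ∉ G.goal j) (hj : G.owner v = j) :
    G.value j v = (⨅ w : {w // G.E v w}, G.value j w) + 1 :=
  (congrFun (G.bellman_value j) v).symm.trans ((if_neg hv).trans (if_pos hj))

theorem value_of_owner_ne (hv : v ∉ G.goal j) (hj : G.owner v ≠ j) :
    G.value j v = (⨆ w : {w // G.E v w}, G.value j w) + 1 :=
  (congrFun (G.bellman_value j) v).symm.trans ((if_neg hv).trans (if_neg hj))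

theorem value_le_value_add_one (hj : G.owner v = j) (hvw : G.E v w) :
    G.value j v ≤ G.value j w + 1 := by
  by_cases hv : v ∈ G.goal j
  · simp [value_of_mem_goal hv]
  · rw [value_of_owner_eq hv hj]
    gcongr
    exact iInf_le (fun w : {w // G.E v w} => G.value j w) ⟨w, hvw⟩

theorem value_add_one_le_value (hv : v ∉ G.goal j) (hj : G.owner v ≠ j) (hvw : G.E v w) :
    G.value j w + 1 ≤ G.value j v := by
  rw [value_of_owner_ne hv hj]
  gcongr
  exact le_iSup (fun w : {w // G.E v w} => G.value j w) ⟨w, hvw⟩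

variable (G)

instance nonempty_succ (v : V) : Nonempty {w // G.E v w} :=
  nonempty_subtype.2 (G.total v)

theorem exists_move_value_add_one_le (v : V) :
    ∃ w, G.E v w ∧ ∀ j, v ∉ G.goal j → G.value j w + 1 ≤ G.value j v := by
  obtain ⟨⟨w, hvw⟩, hw⟩ := ciInf_mem fun w : {w // G.E v w} => G.value (G.owner v) w
  refine ⟨w, hvw, fun j hv => ?_⟩
  by_cases hj : G.owner v = j
  · subst hj
    rw [value_of_owner_eq hv rfl, ← hw]
  · exact value_add_one_le_value hv hj hvw

theorem exists_move_value_le_add_one (j : P) (v : V) [Finite {w // G.E v w}] :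
    ∃ w, G.E v w ∧ G.value j v ≤ G.value j w + 1 := by
  obtain ⟨⟨w, hvw⟩, hw⟩ := exists_eq_ciSup_of_finite (f := fun w : {w // G.E v w} => G.value j w)
  refine ⟨w, hvw, ?_⟩
  by_cases hv : v ∈ G.goal j
  · simp [value_of_mem_goal hv]
  by_cases hj : G.owner v = j
  · exact value_le_value_add_one hj hvw
  · rw [value_of_owner_ne hv hj, ← hw]

end Value

section Plays

variable {P V : Type} {G : ReachGame P V}

theorem cost_le_of_mem_goal {j : P} {ρ : ℕ → V} {l : ℕ} (hl : ρ l ∈ G.goal j) :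
    G.cost j ρ ≤ l :=
  sInf_le ⟨l, rfl, hl⟩

theorem le_cost {j : P} {ρ : ℕ → V} {c : ℕ∞} (hc : ∀ l : ℕ, ρ l ∈ G.goal j → c ≤ l) :
    c ≤ G.cost j ρ := by
  refine le_sInf ?_
  rintro _ ⟨l, rfl, hl⟩
  exact hc l hl

theorem cost_le_add_of_decreasing {j : P} {ρ : ℕ → V} {f : ℕ → ℕ∞}
    (hf : ∀ n, ρ n ∉ G.goal j → f (n + 1) + 1 ≤ f n) (n : ℕ) : G.cost j ρ ≤ n + f n := by
  suffices bound : ∀ m n : ℕ, f n ≤ m → G.cost j ρ ≤ n + m by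
    cases hn : f n with
    | top => simp
    | coe m => exact bound m n hn.le
  intro m
  induction m with
  | zero =>
    intro n hn
    by_cases hgoal : ρ n ∈ G.goal j
    · simpa using cost_le_of_mem_goal hgoal
    · simpa using (hf n hgoal).trans hn
  | succ m ih =>
    intro n hn
    by_cases hgoal : ρ n ∈ G.goal j
    · exact (cost_le_of_mem_goal hgoal).trans le_self_add
    · have hnext : f (n + 1) ≤ m := by
        have := (hf n hgoal).trans hn
        push_cast at this
        exact (ENat.add_le_add_iff_right ENat.one_ne_top).1 this
      calc G.cost j ρ ≤ (n + 1 : ℕ) + m := ih (n + 1) hnext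
        _ = n + (m + 1 : ℕ) := by push_cast; ring

theorem lastV_concat (h : List V) (v : V) : G.lastV (h ++ [v]) = v :=
  List.getLastD_concat

theorem lastV_append (h δ : List V) : G.lastV (h ++ δ) = δ.getLastD (G.lastV h) := by
  simp only [lastV, List.getLastD_eq_getLast?, List.getLast?_append, Option.getD_or]

variable (G) in
theorem exists_eq_concat_lastV {h : List V} (hh : h ≠ []) : ∃ t, h = t ++ [G.lastV h] := by
  obtain ⟨t, v, rfl⟩ := List.eq_nil_or_concat' h |>.resolve_left hh
  exact ⟨t, by rw [lastV_concat]⟩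

theorem IsHistory.concat {h : List V} {w : V} (hh : G.IsHistory h) (hw : G.E (G.lastV h) w) :
    G.IsHistory (h ++ [w]) := by
  obtain ⟨hne, hhead, hchain⟩ := hh
  refine ⟨by simp, by rwa [List.head?_append_of_ne_nil _ hne], ?_⟩
  obtain ⟨t, ht⟩ := exists_eq_concat_lastV G hne
  generalize G.lastV h = u at ht hw
  subst ht
  rw [List.append_assoc]
  exact List.isChain_append_cons_cons.2 ⟨hchain, hw, List.isChain_singleton w⟩

variable {prof : P → List V → V}

theorem outHist_ne_nil (n : ℕ) : G.outHist prof n ≠ [] := by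
  cases n <;> simp [outHist]

theorem outcome_succ (n : ℕ) :
    G.outcome prof (n + 1) = prof (G.owner (G.outcome prof n)) (G.outHist prof n) :=
  lastV_concat _ _

theorem outHist_succ (n : ℕ) :
    G.outHist prof (n + 1) = G.outHist prof n ++ [G.outcome prof (n + 1)] := by
  rw [outcome_succ]
  rfl

theorem IsProfile.isHistory_outHist (hprof : G.IsProfile prof) (n : ℕ) :
    G.IsHistory (G.outHist prof n) := by
  induction n with
  | zero => exact ⟨by simp [outHist], rfl, List.isChain_singleton _⟩
  | succ n ih => exact ih.concat (hprof _ _ ih rfl)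

theorem IsProfile.edge_outcome (hprof : G.IsProfile prof) (n : ℕ) :
    G.E (G.outcome prof n) (G.outcome prof (n + 1)) := by
  rw [outcome_succ]
  exact hprof _ _ (hprof.isHistory_outHist n) rfl

theorem IsProfile.update [DecidableEq P] {j : P} {σ : List V → V} (hprof : G.IsProfile prof)
    (hσ : G.IsStrategy j σ) : G.IsProfile (Function.update prof j σ) := by
  intro i
  obtain rfl | hij := eq_or_ne i j
  · rwa [Function.update_self]
  · rw [Function.update_of_ne hij]
    exact hprof i

theorem finiteMemory_of_finite {S : Type*} [Finite S] {i : P} {σ : List V → V} (m : List V → S)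
    (hm : ∀ h h', G.IsHistory h → G.IsHistory h' → m h = m h' → G.MemEq i σ h h') :
    G.FiniteMemory i σ := by
  obtain ⟨R, hR, hbij⟩ := Set.exists_subset_bijOn {h | G.IsHistory h} m
  have hfin : R.Finite := hbij.finite_iff_finite.2 (Set.toFinite _)
  refine ⟨hfin.toFinset, fun h hh => ?_⟩
  obtain ⟨h', hh', hmem⟩ := hbij.surjOn (Set.mem_image_of_mem m hh)
  exact ⟨h', hfin.mem_toFinset.2 hh', hR hh', hm h h' hh (hR hh') hmem.symm⟩

end Plays

section GrimTrigger

open Classical in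
/-- The vertex at which a finite path first makes a move other than the one prescribed by `τ`, and
`none` if it follows `τ` throughout. Recording the vertex instead of its owner keeps the memory
finite even when there are infinitely many players. -/
noncomputable def firstDeviation {V : Type*} (τ : V → V) : List V → Option V
  | u :: w :: h => if w = τ u then firstDeviation τ (w :: h) else some u
  | _ => none

theorem firstDeviation_append_cons {V : Type*} (τ : V → V) (h : List V) (u : V) (δ : List V) :
    firstDeviation τ (h ++ u :: δ) =
      (firstDeviation τ (h ++ [u])).or (firstDeviation τ (u :: δ)) := by
  induction h with
  | nil => simp [firstDeviation]
  | cons v h ih =>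
    cases h with
    | nil => by_cases hu : u = τ v <;> simp [firstDeviation, hu]
    | cons w h =>
      by_cases hw : w = τ v
      · simpa [firstDeviation, hw] using ih
      · simp [firstDeviation, hw]

variable {P V : Type} {G : ReachGame P V}

variable (G) in
theorem firstDeviation_append (τ : V → V) {h : List V} (hh : h ≠ []) (δ : List V) :
    firstDeviation τ (h ++ δ) =
      (firstDeviation τ h).or (firstDeviation τ (G.lastV h :: δ)) := by
  obtain ⟨t, ht⟩ := exists_eq_concat_lastV G hh
  generalize G.lastV h = u at ht ⊢
  rw [ht, List.append_assoc, List.singleton_append, firstDeviation_append_cons]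

theorem firstDeviation_outHist_succ (τ : V → V) (prof : P → List V → V) (n : ℕ) :
    firstDeviation τ (G.outHist prof (n + 1)) = (firstDeviation τ (G.outHist prof n)).or
      (firstDeviation τ [G.outcome prof n, G.outcome prof (n + 1)]) := by
  rw [outHist_succ, firstDeviation_append G τ (outHist_ne_nil n)]
  rfl

theorem outcome_eq_iterate_of_firstDeviation_eq_none {τ : V → V} {prof : P → List V → V} {n : ℕ}
    (hn : firstDeviation τ (G.outHist prof n) = none) : G.outcome prof n = τ^[n] G.v0 := by
  induction n with
  | zero => rfl
  | succ n ih =>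
    rw [firstDeviation_outHist_succ, Option.or_eq_none_iff] at hn
    have hmove : G.outcome prof (n + 1) = τ (G.outcome prof n) := by
      simpa [firstDeviation] using hn.2
    rw [hmove, ih hn.1, Function.iterate_succ_apply']

variable (G) in
/-- The strategy, common to all players, that follows `τ` until it is left for the first time, and
then follows the positional strategy `pun j`, where `j` is the player who left `τ`. -/
noncomputable def grimTrigger (τ : V → V) (pun : P → V → V) (h : List V) : V :=
  match firstDeviation τ h with
  | none => τ (G.lastV h)
  | some u => pun (G.owner u) (G.lastV h)

variable {τ : V → V} {pun : P → V → V}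

theorem isProfile_grimTrigger (hτ : ∀ v, G.E v (τ v)) (hpun : ∀ j v, G.E v (pun j v)) :
    G.IsProfile fun _ => G.grimTrigger τ pun := by
  intro i h _ _
  dsimp only [grimTrigger]
  split
  · exact hτ _
  · exact hpun _ _

theorem finiteMemory_grimTrigger [Finite V] (τ : V → V) (pun : P → V → V) (i : P) :
    G.FiniteMemory i (G.grimTrigger τ pun) := by
  refine finiteMemory_of_finite (fun h => (firstDeviation τ h, G.lastV h)) ?_
  intro h h' hh hh' hmem δ _ _ _ _
  obtain ⟨hdev, hlast⟩ := Prod.mk.inj hmem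
  have hdev' : firstDeviation τ (h ++ δ) = firstDeviation τ (h' ++ δ) := by
    rw [firstDeviation_append G τ hh.1, firstDeviation_append G τ hh'.1, hdev, hlast]
  have hlast' : G.lastV (h ++ δ) = G.lastV (h' ++ δ) := by
    rw [lastV_append, lastV_append, hlast]
  rw [grimTrigger, grimTrigger, hdev', hlast']

theorem firstDeviation_outHist_grimTrigger (n : ℕ) :
    firstDeviation τ (G.outHist (fun _ => G.grimTrigger τ pun) n) = none := by
  induction n with
  | zero => simp [outHist, firstDeviation]
  | succ n ih =>
    have hmove : G.outcome (fun _ => G.grimTrigger τ pun) (n + 1) =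
        τ (G.outcome (fun _ => G.grimTrigger τ pun) n) := by
      rw [outcome_succ, grimTrigger, ih]
      rfl
    simp [firstDeviation_outHist_succ, ih, hmove, firstDeviation]

theorem outcome_grimTrigger (n : ℕ) :
    G.outcome (fun _ => G.grimTrigger τ pun) n = τ^[n] G.v0 :=
  outcome_eq_iterate_of_firstDeviation_eq_none (firstDeviation_outHist_grimTrigger n)

theorem cost_grimTrigger_le {j : P} {f : V → ℕ∞}
    (hτ : ∀ v, v ∉ G.goal j → f (τ v) + 1 ≤ f v) (n : ℕ) :
    G.cost j (G.outcome fun _ => G.grimTrigger τ pun) ≤ n + f (τ^[n] G.v0) := by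
  refine cost_le_add_of_decreasing (f := fun n => f (τ^[n] G.v0)) (fun n hn => ?_) n
  rw [outcome_grimTrigger] at hn
  rw [Function.iterate_succ_apply']
  exact hτ _ hn

section Deviation

variable [DecidableEq P] {j : P} {σ : List V → V}

local notation "deviant" => Function.update (fun _ => G.grimTrigger τ pun) j σ

theorem outcome_update_grimTrigger_succ {n : ℕ} (hn : G.owner (G.outcome deviant n) ≠ j) :
    G.outcome deviant (n + 1) = G.grimTrigger τ pun (G.outHist deviant n) := by
  rw [outcome_succ, Function.update_of_ne hn]

theorem owner_eq_of_firstDeviation_eq_some {n : ℕ} {u : V}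
    (hu : firstDeviation τ (G.outHist deviant n) = some u) : G.owner u = j := by
  induction n with
  | zero => simp [outHist, firstDeviation] at hu
  | succ n ih =>
    cases hdev : firstDeviation τ (G.outHist deviant n) with
    | some u' =>
      rw [firstDeviation_outHist_succ, hdev, Option.some_or] at hu
      exact ih (hdev.trans hu)
    | none =>
      by_contra hj
      rw [firstDeviation_outHist_succ, hdev, Option.none_or] at hu
      obtain ⟨hleft, rfl⟩ : G.outcome deviant (n + 1) ≠ τ (G.outcome deviant n) ∧
        G.outcome deviant n = u := by simpa [firstDeviation] using hu
      apply hleft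
      rw [outcome_update_grimTrigger_succ hj, grimTrigger, hdev]
      rfl

theorem value_outcome_le_of_firstDeviation_ne_none (hdeviant : G.IsProfile deviant)
    (hpun : ∀ v, G.value j v ≤ G.value j (pun j v) + 1) {n : ℕ}
    (hn : firstDeviation τ (G.outHist deviant (n + 1)) ≠ none) :
    G.value j (G.outcome deviant n) ≤ G.value j (G.outcome deviant (n + 1)) + 1 := by
  by_cases hj : G.owner (G.outcome deviant n) = j
  · exact value_le_value_add_one hj (hdeviant.edge_outcome n)
  · cases hdev : firstDeviation τ (G.outHist deviant n) with
    | none =>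
      have hfirst : firstDeviation τ (G.outHist deviant (n + 1)) = some (G.outcome deviant n) := by
        rw [firstDeviation_outHist_succ, hdev, Option.none_or] at hn ⊢
        simpa [firstDeviation] using hn
      exact absurd (owner_eq_of_firstDeviation_eq_some hfirst) hj
    | some u =>
      have hpunish : G.outcome deviant (n + 1) = pun j (G.outcome deviant n) := by
        rw [outcome_update_grimTrigger_succ hj, grimTrigger, hdev,
          ← owner_eq_of_firstDeviation_eq_some hdev]
        rfl
      rw [hpunish]
      exact hpun _

theorem cost_grimTrigger_le_add_value (hdeviant : G.IsProfile deviant)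
    (hτ : ∀ v, v ∉ G.goal j → G.value j (τ v) + 1 ≤ G.value j v)
    (hpun : ∀ v, G.value j v ≤ G.value j (pun j v) + 1) (n : ℕ) :
    G.cost j (G.outcome fun _ => G.grimTrigger τ pun) ≤
      n + G.value j (G.outcome deviant n) := by
  induction n with
  | zero => exact cost_grimTrigger_le hτ 0
  | succ n ih =>
    by_cases hdev : firstDeviation τ (G.outHist deviant (n + 1)) = none
    · rw [outcome_eq_iterate_of_firstDeviation_eq_none hdev]
      exact cost_grimTrigger_le hτ (n + 1)
    · calc G.cost j (G.outcome fun _ => G.grimTrigger τ pun)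
          ≤ n + G.value j (G.outcome deviant n) := ih
        _ ≤ n + (G.value j (G.outcome deviant (n + 1)) + 1) := by
          gcongr
          exact value_outcome_le_of_firstDeviation_ne_none hdeviant hpun hdev
        _ = (n + 1 : ℕ) + G.value j (G.outcome deviant (n + 1)) := by
          push_cast
          ring

end Deviation

theorem isNash_grimTrigger [DecidableEq P] (hτE : ∀ v, G.E v (τ v)) (hpunE : ∀ j v, G.E v (pun j v))
    (hτ : ∀ v j, v ∉ G.goal j → G.value j (τ v) + 1 ≤ G.value j v)
    (hpun : ∀ j v, G.value j v ≤ G.value j (pun j v) + 1) :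
    G.IsNash fun _ => G.grimTrigger τ pun := by
  intro j σ hσ
  have hdeviant := (isProfile_grimTrigger hτE hpunE).update hσ
  refine le_cost fun l hl => ?_
  simpa [value_of_mem_goal hl] using
    cost_grimTrigger_le_add_value hdeviant (fun v => hτ v j) (hpun j) l

end GrimTrigger

end ReachGame

theorem exists_finiteMemory_nash_general {P V : Type} [DecidableEq P] [Finite V]
    (G : ReachGame P V) :
    ∃ prof : P → List V → V,
      G.IsProfile prof ∧ G.FiniteMemoryProfile prof ∧ G.IsNash prof := by
  choose τ hτE hτ using G.exists_move_value_add_one_le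
  choose pun hpunE hpun using fun j v => G.exists_move_value_le_add_one j v
  exact ⟨fun _ => G.grimTrigger τ pun, ReachGame.isProfile_grimTrigger hτE hpunE,
    ReachGame.finiteMemory_grimTrigger τ pun, ReachGame.isNash_grimTrigger hτE hpunE hτ hpun⟩

/-- Every quantitative multiplayer reachability game has a
finite-memory Nash equilibrium. -/
theorem exists_finiteMemory_nash {P V : Type} [Fintype P] [DecidableEq P] [Fintype V]
    (G : ReachGame P V) :
    ∃ prof : P → List V → V,
      G.IsProfile prof ∧ G.FiniteMemoryProfile prof ∧ G.IsNash prof := by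
  exact exists_finiteMemory_nash_general G
end

section
/- Kuhn's theorem: Let T be a finite rooted tree whose internal nodes are partitioned among a finite set of players Π, and consider the game on T where the owner of the current node chooses a child, plays being the root-to-leaf paths, each play being assigned a cost profile; for each player i let ≾_i be a preference relation (a total, reflexive, transitive binary relation) on cost profiles. Then there exists a strategy profile (σ_i)_{i∈Π} such that for every player j and every strategy σ'_j of player j, the cost profile of ⟨σ'_j, (σ_i)_{i≠j}⟩ is ≾_j-below the cost profile of ⟨(σ_i)_{i∈Π}⟩. -/
/-- A finite rooted game tree: a leaf carries a cost profile (of type `C`),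
and an internal node is owned by a player and has a nonempty (finite) list of
children (`t :: ts`). -/
inductive GTree (P : Type) (C : Type) : Type
  | leaf : C → GTree P C
  | node : P → GTree P C → List (GTree P C) → GTree P C

/-- `σ` is a (total encoding of a) strategy of player `i` on the game tree:
at every node owned by `i` it chooses one of the children. -/
def ValidStrat {P C : Type} (i : P) (σ : GTree P C → GTree P C) : Prop :=
  ∀ (t : GTree P C) (ts : List (GTree P C)), σ (GTree.node i t ts) ∈ t :: ts

/-- `OutcomeT prof t c` : the root-to-leaf play obtained by following the strategy
profile `prof` from the node `t` ends in a leaf with cost profile `c`. -/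
inductive OutcomeT {P C : Type} (prof : P → GTree P C → GTree P C) :
    GTree P C → C → Prop
  | leaf (c : C) : OutcomeT prof (GTree.leaf c) c
  | node (p : P) (t : GTree P C) (ts : List (GTree P C)) (c : C) :
      prof p (GTree.node p t ts) ∈ t :: ts →
      OutcomeT prof (prof p (GTree.node p t ts)) c →
      OutcomeT prof (GTree.node p t ts) c

/-! Backward induction: let the owner of each node move to a child whose value is greatest for the
owner, and give the node that value. Along any play, a move prescribed by this profile keeps the
value unchanged, and a move to any other child does not raise it for the player who makes it. So the
profile attains the value of the tree, and a player who deviates alone ends at or below it. -/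

theorem exists_mem_forall_mem_rel {α : Type*} (r : α → α → Prop) [Std.Total r] [IsTrans α r]
    {l : List α} (hl : l ≠ []) : ∃ m ∈ l, ∀ a ∈ l, r a m := by
  have : Nonempty {a // a ∈ l} := nonempty_subtype.2 (List.exists_mem_of_ne_nil l hl)
  have : Finite {a // a ∈ l} := l.finite_toSet
  have hdir : Directed r (Subtype.val : {a // a ∈ l} → α) := Std.Total.directed _
  obtain ⟨⟨m, hm⟩, hmax⟩ := hdir.finite_le id
  exact ⟨m, hm, fun a ha ↦ hmax ⟨a, ha⟩⟩

section Greatest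

variable {α : Type*} (r : α → α → Prop) [Std.Total r] [IsTrans α r] (a : α) (l : List α)

/-- An `r`-greatest entry of the list `a :: l`. As `r` need not be antisymmetric there may be
several; one is chosen arbitrarily. -/
noncomputable def greatestOf : α :=
  (exists_mem_forall_mem_rel r (List.cons_ne_nil a l)).choose

theorem greatestOf_mem : greatestOf r a l ∈ a :: l :=
  (exists_mem_forall_mem_rel r (List.cons_ne_nil a l)).choose_spec.1

variable {a l} in
theorem rel_greatestOf {b : α} (hb : b ∈ a :: l) : r b (greatestOf r a l) :=
  (exists_mem_forall_mem_rel r (List.cons_ne_nil a l)).choose_spec.2 b hb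

end Greatest

theorem OutcomeT.rel_of_step {P C : Type} {prof : P → GTree P C → GTree P C}
    {r : C → C → Prop} [IsTrans C r] {v : GTree P C → C} (hleaf : ∀ c, r c (v (.leaf c)))
    (hstep : ∀ p t ts, prof p (.node p t ts) ∈ t :: ts →
      r (v (prof p (.node p t ts))) (v (.node p t ts)))
    {t : GTree P C} {c : C} (hc : OutcomeT prof t c) : r c (v t) := by
  induction hc with
  | leaf c => exact hleaf c
  | node p t ts c hmem _ ih => exact trans_of r ih (hstep p t ts hmem)

namespace GTree

variable {P C : Type} (pref : P → C → C → Prop) [∀ i, Std.Total (pref i)] [∀ i, IsTrans C (pref i)]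

/-- The backward-induction value of a game tree: the cost profile of a leaf, and at an internal node
a greatest value among the children, for the preference of the owner of the node. -/
noncomputable def value : GTree P C → C
  | leaf c => c
  | node p t ts => greatestOf (pref p) (value t) (ts.map value)

theorem value_leaf (c : C) : (leaf c : GTree P C).value pref = c := by
  rw [value]

theorem value_node (p : P) (t : GTree P C) (ts : List (GTree P C)) :
    (node p t ts).value pref = greatestOf (pref p) (t.value pref) (ts.map (value pref)) := by
  rw [value]

theorem exists_mem_value_eq_value_node (p : P) (t : GTree P C) (ts : List (GTree P C)) :
    ∃ s ∈ t :: ts, s.value pref = (node p t ts).value pref := by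
  rw [← List.mem_map, List.map_cons, value_node]
  exact greatestOf_mem ..

theorem rel_value_node_of_mem (p : P) {s t : GTree P C} {ts : List (GTree P C)}
    (hs : s ∈ t :: ts) : pref p (s.value pref) ((node p t ts).value pref) := by
  rw [value_node]
  exact rel_greatestOf (pref p) (List.mem_map_of_mem (f := value pref) hs)

/-- The backward-induction move: a child with the same value as the node. Only nodes owned by a
player matter to that player's strategy, so this one function serves as the strategy of every
player. A leaf, where nobody moves, is sent to itself. -/
noncomputable def bestChild : GTree P C → GTree P C
  | leaf c => leaf c
  | node p t ts => (exists_mem_value_eq_value_node pref p t ts).choose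

theorem bestChild_node_mem (p : P) (t : GTree P C) (ts : List (GTree P C)) :
    bestChild pref (node p t ts) ∈ t :: ts :=
  (exists_mem_value_eq_value_node pref p t ts).choose_spec.1

theorem value_bestChild_node (p : P) (t : GTree P C) (ts : List (GTree P C)) :
    (bestChild pref (node p t ts)).value pref = (node p t ts).value pref :=
  (exists_mem_value_eq_value_node pref p t ts).choose_spec.2

variable {pref} {t : GTree P C} {c : C}

theorem eq_value_of_outcomeT (hc : OutcomeT (fun _ ↦ bestChild pref) t c) : c = t.value pref :=
  hc.rel_of_step (fun c ↦ (value_leaf pref c).symm) fun p t ts _ ↦ value_bestChild_node pref p t ts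

theorem rel_value_of_outcomeT_update [DecidableEq P] {j : P} {σ : GTree P C → GTree P C}
    (hc : OutcomeT (Function.update (fun _ ↦ bestChild pref) j σ) t c) :
    pref j c (t.value pref) := by
  refine hc.rel_of_step (fun c ↦ ?_) fun p t ts hmem ↦ ?_
  · rw [value_leaf]
    exact refl_of (pref j) c
  · obtain rfl | hp := eq_or_ne p j
    · exact rel_value_node_of_mem pref p hmem
    · rw [Function.update_of_ne hp, value_bestChild_node]
      exact refl_of (pref j) _

end GTree

theorem kuhn_general {P C : Type} [DecidableEq P] (pref : P → C → C → Prop)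
    [∀ i, Std.Total (pref i)] [∀ i, IsTrans C (pref i)] :
    ∃ prof : P → GTree P C → GTree P C,
      (∀ i : P, ValidStrat i (prof i)) ∧
      ∀ (t : GTree P C) (j : P) (σ' : GTree P C → GTree P C), ValidStrat j σ' →
        ∀ c c' : C, OutcomeT prof t c →
          OutcomeT (Function.update prof j σ') t c' →
          pref j c' c := by
  refine ⟨fun _ ↦ GTree.bestChild pref, GTree.bestChild_node_mem pref, ?_⟩
  intro t j σ' _ c c' hc hc'
  rw [GTree.eq_value_of_outcomeT hc]
  exact GTree.rel_value_of_outcomeT_update hc'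

/-- **Kuhn's theorem.** On a finite game tree whose internal nodes are
partitioned among a finite set of players, given for each player `i` a preference
relation `pref i` (total, reflexive and transitive) on cost profiles, there exists a
strategy profile `prof` such that for every player `j` and every strategy `σ'` of
player `j`, the cost profile of the outcome of `⟨σ', prof_{-j}⟩` is
`pref j`-below the cost profile of the outcome of `prof`. -/
theorem kuhn {P C : Type} [Fintype P] [DecidableEq P]
    (pref : P → C → C → Prop)
    (htotal : ∀ (i : P) (x y : C), pref i x y ∨ pref i y x)
    (hrefl : ∀ (i : P) (x : C), pref i x x)
    (htrans : ∀ (i : P) (x y z : C), pref i x y → pref i y z → pref i x z)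
    (t : GTree P C) :
    ∃ prof : P → GTree P C → GTree P C,
      (∀ i : P, ValidStrat i (prof i)) ∧
      ∀ (j : P) (σ' : GTree P C → GTree P C), ValidStrat j σ' →
        ∀ c c' : C, OutcomeT prof t c →
          OutcomeT (Function.update prof j σ') t c' →
          pref j c' c := by
  have (i : P) : Std.Total (pref i) := ⟨htotal i⟩
  have (i : P) : IsTrans C (pref i) := ⟨htrans i⟩
  obtain ⟨prof, hvalid, hequilibrium⟩ := kuhn_general pref
  exact ⟨prof, hvalid, hequilibrium t⟩
end
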